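/- arXiv:1407.4208 — 2 statements merged into one kernel-verified Lean document; each statement's English description precedes it below -/
import Mathlib

section
/- Let γ = (γ_j)_{j≥1} be non-increasing nonnegative weights with ∑_{j≥1} γ_j < ∞, and let δ > 0. Then there exists a constant C > 0 (depending only on γ and δ, independent of p and s) such that for every prime p and every s ∈ ℕ the Korobov point set Q_{p²,s} satisfies D*_γ(Q_{p²,s}) ≤ C·p^{−(1−δ)}. -/
open Finset

/-- Local discrepancy of the point set `x` at the corner point `t`:
`Δ(t) = #{n : x_n ∈ [0,t)}/N − ∏_j t_j`. -/
noncomputable def localDisc {N s : ℕ} (x : Fin N → Fin s → ℝ) (t : Fin s → ℝ) : ℝ :=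
  ((univ.filter fun n => ∀ j, x n j < t j).card : ℝ) / N - ∏ j, t j

/-- `(z_u, 1)`: the vector `z` with all components whose index is not in `u`
replaced by `1`. -/
def projPoint {s : ℕ} (u : Finset (Fin s)) (z : Fin s → ℝ) : Fin s → ℝ :=
  fun j => if j ∈ u then z j else 1

/-- The weight `γ_u = ∏_{j ∈ u} γ_j` of a set of coordinates `u ⊆ {1,…,s}`;
coordinate `j : Fin s` carries weight `γ (j+1)` (weights are indexed from `1`). -/
noncomputable def weightOf {s : ℕ} (γ : ℕ → ℝ) (u : Finset (Fin s)) : ℝ :=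
  ∏ j ∈ u, γ (j.1 + 1)

/-- Weighted star-discrepancy
`D*_γ(x) = sup_{z ∈ [0,1]^s} max_{∅ ≠ u ⊆ [s]} γ_u |Δ(z_u,1)|`. -/
noncomputable def wStarDisc {N s : ℕ} (γ : ℕ → ℝ) (x : Fin N → Fin s → ℝ) : ℝ :=
  sSup {d : ℝ | ∃ z : Fin s → ℝ, (∀ j, z j ∈ Set.Icc (0:ℝ) 1) ∧
    ∃ u : Finset (Fin s), u.Nonempty ∧
      d = weightOf γ u * |localDisc x (projPoint u z)|}

/-- `N`-th minimal weighted star-discrepancy `disc_γ(N,s)`. -/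
noncomputable def wMinDisc (γ : ℕ → ℝ) (N s : ℕ) : ℝ :=
  sInf {d : ℝ | ∃ x : Fin N → Fin s → ℝ,
    (∀ n j, x n j ∈ Set.Ico (0:ℝ) 1) ∧ d = wStarDisc γ x}

/-- Korobov's `p`-set `P_{p,s}`: the points `x_n = ({n/p}, {n²/p}, …, {n^s/p})`
for `n = 0, 1, …, p−1`. -/
noncomputable def korobovP (p s : ℕ) : Fin p → Fin s → ℝ :=
  fun n j => Int.fract ((n.1 : ℝ) ^ (j.1 + 1) / p)

/-- Korobov's `p²`-set `Q_{p²,s}`: the points `x_n = ({n/p²}, {n²/p²}, …, {n^s/p²})`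
for `n = 0, 1, …, p²−1`. -/
noncomputable def korobovQ (p s : ℕ) : Fin (p ^ 2) → Fin s → ℝ :=
  fun n j => Int.fract ((n.1 : ℝ) ^ (j.1 + 1) / ((p : ℝ) ^ 2))

/-- The Hua–Wang multi-set `R_{p²,s}`: the `p²` points
`x_{a,k} = ({k/p}, {ak/p}, …, {a^{s−1}k/p})` for `a, k = 0, …, p−1`, counted with
multiplicity; here the index `n < p²` encodes `a = n / p` and `k = n % p`. -/
noncomputable def huaWangR (p s : ℕ) : Fin (p ^ 2) → Fin s → ℝ :=
  fun n j => Int.fract (((n.1 / p : ℕ) : ℝ) ^ j.1 * ((n.1 % p : ℕ) : ℝ) / p)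


/-! ### Fourier coefficients of integer intervals -/

noncomputable def cf (N : ℕ) [NeZero N] (m : ℕ) (h : ZMod N) : ℂ :=
  (1 / (N : ℂ)) * ∑ a ∈ range m, (ZMod.stdAddChar (N := N)) (-(h * (a : ZMod N)))

lemma cf_inv (N : ℕ) [NeZero N] (m : ℕ) (hm : m ≤ N) (x : ZMod N) :
    (if x.val < m then (1 : ℂ) else 0) = ∑ h, cf N m h * (ZMod.stdAddChar (N := N)) (h * x) := by
  have hN : (N : ℂ) ≠ 0 := by exact_mod_cast NeZero.ne N
  have key : ∀ a ∈ range m, ∑ h : ZMod N, (ZMod.stdAddChar (N := N)) (h * (x - (a : ZMod N)))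
      = if x.val = a then (N : ℂ) else 0 := by
    intro a ha
    rw [AddChar.sum_mulShift _ (ZMod.isPrimitive_stdAddChar N)]
    have : (x - (a : ZMod N) = 0) ↔ x.val = a := by
      rw [sub_eq_zero]
      constructor
      · rintro rfl
        exact ZMod.val_cast_of_lt (lt_of_lt_of_le (mem_range.1 ha) hm)
      · rintro rfl
        exact (ZMod.natCast_zmod_val x).symm
    simp only [this, ZMod.card]
    split_ifs <;> simp
  have h2 : ∀ h : ZMod N, cf N m h * (ZMod.stdAddChar (N := N)) (h * x)
      = (1 / (N : ℂ)) * ∑ a ∈ range m, (ZMod.stdAddChar (N := N)) (h * (x - (a : ZMod N))) := by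
    intro h
    rw [cf, mul_assoc, Finset.sum_mul]
    congr 1
    refine Finset.sum_congr rfl fun a _ => ?_
    rw [← AddChar.map_add_eq_mul]
    congr 1
    ring
  simp only [h2]
  rw [← Finset.mul_sum, Finset.sum_comm, Finset.sum_congr rfl key, Finset.sum_ite_eq]
  simp only [mem_range]
  split_ifs <;> simp [hN]

lemma cf_zero (N : ℕ) [NeZero N] (m : ℕ) : cf N m 0 = (m : ℂ) / N := by
  simp [cf]; ring

lemma cf_zero_norm (N : ℕ) [NeZero N] (m : ℕ) (hm : m ≤ N) : ‖cf N m 0‖ ≤ 1 := by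
  have hN : (0 : ℝ) < N := by exact_mod_cast Nat.pos_of_ne_zero (NeZero.ne N)
  rw [cf_zero, norm_div, Complex.norm_natCast, Complex.norm_natCast, div_le_one hN]
  exact_mod_cast hm

lemma sin_lower (t : ℝ) (h0 : 0 ≤ t) (h1 : t ≤ 1) : 2 * t * (1 - t) ≤ Real.sin (Real.pi * t) := by
  have hp := Real.pi_pos
  have aux : ∀ r : ℝ, 0 ≤ r → r ≤ 1 / 2 → 2 * r ≤ Real.sin (Real.pi * r) := by
    intro r hr hr'
    have := Real.mul_le_sin (x := Real.pi * r) (by positivity) (by nlinarith)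
    have e : 2 / Real.pi * (Real.pi * r) = 2 * r := by field_simp
    linarith
  rcases le_total t (1 / 2) with h | h
  · have := aux t h0 h
    nlinarith
  · have := aux (1 - t) (by linarith) (by linarith)
    have e : Real.sin (Real.pi * (1 - t)) = Real.sin (Real.pi * t) := by
      rw [mul_sub, mul_one, Real.sin_pi_sub]
    rw [e] at this
    nlinarith

/-- majorant of the Fourier coefficients -/
noncomputable def wv (N v : ℕ) : ℝ := (1 / (v : ℝ) + 1 / ((N : ℝ) - v)) / 2

lemma wv_nonneg (N v : ℕ) (h : v < N) : 0 ≤ wv N v := by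
  have : (v : ℝ) < N := by exact_mod_cast h
  have : 0 < (N : ℝ) - v := by linarith
  unfold wv; positivity

lemma cf_norm (N : ℕ) [NeZero N] (m : ℕ) (h : ZMod N) (hh : h ≠ 0) :
    ‖cf N m h‖ ≤ wv N h.val := by
  have hN : (0 : ℝ) < N := by exact_mod_cast Nat.pos_of_ne_zero (NeZero.ne N)
  have hv : (0 : ℝ) < h.val := by
    exact_mod_cast Nat.pos_of_ne_zero (by rwa [Ne, ZMod.val_eq_zero])
  have hv2 : (h.val : ℝ) < N := by exact_mod_cast ZMod.val_lt h
  set ψ := (ZMod.stdAddChar (N := N)) with hψ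
  have hz : ∀ a : ℕ, ψ (-(h * (a : ZMod N))) = (ψ (-h)) ^ a := by
    intro a
    rw [← AddChar.map_nsmul_eq_pow]
    congr 1
    rw [nsmul_eq_mul]; ring
  have hn : ‖ψ (-h) - 1‖ = 2 * Real.sin (Real.pi * (h.val / N)) := by
    have e1 : ‖ψ (-h) - 1‖ = ‖ψ h - 1‖ := by
      have : ψ (-h) - 1 = - (ψ (-h) * (ψ h - 1)) := by
        rw [mul_sub, ← AddChar.map_add_eq_mul]; simp
      rw [this, norm_neg, norm_mul, AddChar.norm_apply, one_mul]
    rw [e1]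
    have e2 : ψ h = Complex.exp (Complex.I * ((2 * Real.pi * (h.val / N) : ℝ) : ℂ)) := by
      have := ZMod.stdAddChar_coe (N := N) (h.val : ℤ)
      rw [Int.cast_natCast, ZMod.natCast_zmod_val] at this
      rw [hψ, this]
      congr 1
      push_cast
      ring
    rw [e2, Complex.norm_exp_I_mul_ofReal_sub_one]
    have e3 : 2 * Real.pi * ((h.val : ℝ) / N) / 2 = Real.pi * (h.val / N) := by ring
    rw [e3, Real.norm_of_nonneg]
    have : 0 ≤ Real.sin (Real.pi * (h.val / N)) := by
      apply Real.sin_nonneg_of_nonneg_of_le_pi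
      · have := Real.pi_pos
        positivity
      · have h1 : (h.val : ℝ) / N ≤ 1 := by rw [div_le_one hN]; exact hv2.le
        nlinarith [Real.pi_pos]
    positivity
  have hs := sin_lower (h.val / N) (by positivity) (by rw [div_le_one hN]; exact hv2.le)
  have hg : ‖∑ a ∈ range m, ψ (-(h * (a : ZMod N)))‖ * ‖ψ (-h) - 1‖ ≤ 2 := by
    rw [Finset.sum_congr rfl (fun a _ => hz a), ← norm_mul, geom_sum_mul]
    calc _ ≤ ‖(ψ (-h)) ^ m‖ + ‖(1 : ℂ)‖ := norm_sub_le _ _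
      _ = 2 := by rw [norm_pow, AddChar.norm_apply]; norm_num
  rw [hn] at hg
  rw [cf, norm_mul]
  have e4 : ‖(1 : ℂ) / N‖ = 1 / N := by simp
  rw [e4]
  set G := ‖∑ a ∈ range m, ψ (-(h * (a : ZMod N)))‖ with hG
  have hG0 : 0 ≤ G := norm_nonneg _
  have hpos : 0 < (N : ℝ) - h.val := by linarith
  have h5 : G * (2 * (2 * (h.val / N) * (1 - h.val / N))) ≤ 2 := by
    refine le_trans ?_ hg
    gcongr
  unfold wv
  have e6 : (1 / (h.val : ℝ) + 1 / ((N : ℝ) - h.val)) / 2 = N / (2 * h.val * (N - h.val)) := by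
    field_simp; ring
  rw [e6, le_div_iff₀ (by positivity)]
  have e7 : G * (2 * (2 * (h.val / N) * (1 - h.val / N)))
    = (1 / N * G * (2 * h.val * (N - h.val))) * (2 / N) := by field_simp
  rw [e7] at h5
  have := mul_le_mul_of_nonneg_right h5 (show 0 ≤ (N : ℝ) / 2 by positivity)
  have e8 : (1 / N * G * (2 * h.val * (N - h.val))) * (2 / N) * ((N : ℝ) / 2)
    = (1 / N * G * (2 * h.val * (N - h.val))) := by field_simp
  rw [e8] at this
  linarith

lemma sum_wv (N : ℕ) (hN : 1 ≤ N) :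
    ∑ v ∈ range (N - 1), wv N (v + 1) ≤ 1 + Real.log N := by
  have h1 : ∑ v ∈ range (N - 1), wv N (v + 1) = (harmonic (N - 1) : ℝ) := by
    unfold wv harmonic
    rw [← Finset.sum_div, Finset.sum_add_distrib]
    have : ∑ v ∈ range (N - 1), 1 / ((N : ℝ) - ((v + 1 : ℕ) : ℝ))
        = ∑ v ∈ range (N - 1), 1 / ((v + 1 : ℕ) : ℝ) := by
      rw [← Finset.sum_range_reflect]
      refine Finset.sum_congr rfl fun v hv => ?_
      have hv := mem_range.1 hv
      have : (((N - 1 - 1 - v + 1 : ℕ)) : ℝ) = N - (v + 1 : ℕ) := by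
        rw [eq_sub_iff_add_eq]
        norm_cast
        omega
      rw [this]
      congr 1
      ring
    rw [this]
    push_cast
    simp
  rw [h1]
  refine (harmonic_le_one_add_log _).trans ?_
  rcases Nat.eq_or_lt_of_le hN with h | h
  · subst h; simp
  · gcongr
    · have : 0 < N - 1 := by omega
      exact_mod_cast this
    · omega

noncomputable def gm (p : ℕ) (h : ZMod (p ^ 2)) : ℝ :=
  if h = 0 then 1 else if p ∣ h.val then p * wv (p ^ 2) h.val else wv (p ^ 2) h.val

lemma gm_nonneg (p : ℕ) [NeZero (p ^ 2)] (h : ZMod (p ^ 2)) : 0 ≤ gm p h := by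
  have := wv_nonneg (p ^ 2) h.val (ZMod.val_lt h)
  unfold gm
  split_ifs <;> positivity

lemma cf_le_gm (p : ℕ) (hp : 1 ≤ p) [NeZero (p ^ 2)] (m : ℕ) (hm : m ≤ p ^ 2) (h : ZMod (p ^ 2)) :
    ‖cf (p ^ 2) m h‖ ≤ gm p h := by
  have h1 := wv_nonneg (p ^ 2) h.val (ZMod.val_lt h)
  have hp' : (1 : ℝ) ≤ p := by exact_mod_cast hp
  unfold gm
  split_ifs with h0 h2
  · subst h0; exact cf_zero_norm _ _ hm
  · refine (cf_norm _ m h h0).trans ?_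
    nlinarith
  · exact cf_norm _ m h h0

lemma sum_gm (p : ℕ) (hp : 1 ≤ p) [NeZero (p ^ 2)] :
    ∑ h : ZMod (p ^ 2), gm p h ≤ 3 + 3 * Real.log p := by
  have hp' : (0 : ℝ) < p := by exact_mod_cast hp
  set N := p ^ 2 with hNdef
  have hN1 : 1 ≤ N := Nat.one_le_pow _ _ hp
  let f : ℕ → ℝ := fun v => if v = 0 then 1 else if p ∣ v then p * wv N v else wv N v
  have e1 : ∑ h : ZMod N, gm p h = ∑ v ∈ range N, f v := by
    refine Finset.sum_bij (fun h _ => h.val) ?_ ?_ ?_ ?_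
    · intro a _; exact mem_range.2 (ZMod.val_lt a)
    · intro a _ b _ hab; exact ZMod.val_injective _ hab
    · intro b hb
      exact ⟨(b : ZMod N), mem_univ _, ZMod.val_cast_of_lt (mem_range.1 hb)⟩
    · intro a _
      simp only [gm, f, ZMod.val_eq_zero]
      rfl
  rw [e1]
  have e2 : range N = range (N - 1 + 1) := by congr 1; omega
  rw [e2, Finset.sum_range_succ']
  have f0 : f 0 = 1 := by simp [f]
  rw [f0]
  have hle : ∀ v ∈ range (N - 1), f (v + 1) ≤ wv N (v + 1) +
      (if p ∣ v + 1 then p * wv N (v + 1) else 0) := by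
    intro v hv
    have := mem_range.1 hv
    have hw := wv_nonneg N (v + 1) (by omega)
    simp only [f, Nat.add_one_ne_zero, if_false]
    split_ifs <;> linarith
  have h3 : ∑ v ∈ range (N - 1), (if p ∣ v + 1 then p * wv N (v + 1) else 0)
      ≤ ∑ k ∈ range (p - 1), wv p (k + 1) := by
    rw [← Finset.sum_filter]
    apply le_of_eq
    symm
    refine Finset.sum_bij (fun k _ => p * (k + 1) - 1) ?_ ?_ ?_ ?_
    · intro k hk
      have hk := mem_range.1 hk
      have h1 : 1 ≤ p * (k + 1) := Nat.mul_pos hp (by omega)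
      have h2 : p * (k + 1) < N := by rw [hNdef, sq]; exact Nat.mul_lt_mul_of_pos_left (by omega) hp
      rw [mem_filter, mem_range]
      refine ⟨by omega, ?_⟩
      rw [Nat.sub_add_cancel h1]
      exact dvd_mul_right _ _
    · intro a _ b _ hab
      have h1 : 1 ≤ p * (a + 1) := Nat.mul_pos hp (by omega)
      have h2 : 1 ≤ p * (b + 1) := Nat.mul_pos hp (by omega)
      have : p * (a + 1) = p * (b + 1) := by
        have : p * (a + 1) - 1 = p * (b + 1) - 1 := hab
        omega
      have := Nat.eq_of_mul_eq_mul_left hp this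
      omega
    · intro b hb
      rw [mem_filter, mem_range] at hb
      obtain ⟨hb1, c, hc⟩ := hb
      have hc0 : c ≠ 0 := by rintro rfl; simp at hc
      have hcp : c < p := by
        have : p * c < p * p := by rw [← hc, ← sq, ← hNdef]; omega
        exact Nat.lt_of_mul_lt_mul_left this
      refine ⟨c - 1, mem_range.2 (by omega), ?_⟩
      have : c - 1 + 1 = c := by omega
      rw [this, ← hc]; rfl
    · intro k hk
      have hk := mem_range.1 hk
      have h1 : 1 ≤ p * (k + 1) := Nat.mul_pos hp (by omega)
      show wv p (k + 1) = p * wv N (p * (k + 1) - 1 + 1)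
      rw [Nat.sub_add_cancel h1]
      unfold wv
      have hkp : ((k : ℝ) + 1) < p := by
        have : k + 1 < p := by omega
        exact_mod_cast this
      have hne : (p : ℝ) - (k + 1) ≠ 0 := by linarith
      have e : (N : ℝ) - (p * (k + 1) : ℕ) = p * (p - (k + 1)) := by
        rw [hNdef]; push_cast; ring
      rw [e]
      push_cast
      field_simp
  have h4 := sum_wv N hN1
  have h5 := sum_wv p hp
  have h6 := Finset.sum_le_sum hle
  rw [Finset.sum_add_distrib] at h6
  have h7 : Real.log N = 2 * Real.log p := by
    rw [hNdef]; push_cast; rw [Real.log_pow]; norm_num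
  linarith

/-! ### The exponential sum modulo `p²` -/

lemma expsum_le_card (p : ℕ) [NeZero (p ^ 2)] (hp : p.Prime) (F : Polynomial (ZMod (p ^ 2))) :
    ‖∑ n : ZMod (p ^ 2), (ZMod.stdAddChar (N := p ^ 2)) (F.eval n)‖ ≤
      ((univ.filter fun n : ZMod (p ^ 2) => F.derivative.eval n * (p : ZMod (p ^ 2)) = 0).card : ℝ) := by
  set ψ := (ZMod.stdAddChar (N := p ^ 2)) with hψ
  have hp0 : (0 : ℝ) < p := by exact_mod_cast hp.pos
  have hpp : (p : ZMod (p ^ 2)) ^ 2 = 0 := by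
    have := ZMod.natCast_self (p ^ 2)
    rwa [Nat.cast_pow] at this
  have h1 : ∀ b : ℕ, ∑ n : ZMod (p ^ 2), ψ (F.eval n) =
      ∑ n : ZMod (p ^ 2), ψ (F.eval n) * ψ (F.derivative.eval n * (p : ZMod (p ^ 2))) ^ b := by
    intro b
    rw [← Equiv.sum_comp (Equiv.addRight ((p : ZMod (p ^ 2)) * (b : ZMod (p ^ 2))))]
    refine Finset.sum_congr rfl fun n _ => ?_
    rw [← AddChar.map_nsmul_eq_pow, ← AddChar.map_add_eq_mul]
    congr 1
    obtain ⟨k, hk⟩ := Polynomial.binomExpansion F n ((p : ZMod (p ^ 2)) * (b : ZMod (p ^ 2)))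
    rw [Equiv.coe_addRight, hk, mul_pow, hpp, nsmul_eq_mul]
    ring
  have h2 : (p : ℂ) * ∑ n : ZMod (p ^ 2), ψ (F.eval n) =
      ∑ n : ZMod (p ^ 2), ψ (F.eval n) *
        ∑ b ∈ range p, ψ (F.derivative.eval n * (p : ZMod (p ^ 2))) ^ b := by
    have : ∑ b ∈ range p, ∑ n : ZMod (p ^ 2), ψ (F.eval n) =
        (p : ℂ) * ∑ n : ZMod (p ^ 2), ψ (F.eval n) := by simp
    rw [← this, Finset.sum_congr rfl (fun b _ => h1 b), Finset.sum_comm]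
    simp only [Finset.mul_sum]
  have h3 : ∀ n : ZMod (p ^ 2), ‖ψ (F.eval n) *
        ∑ b ∈ range p, ψ (F.derivative.eval n * (p : ZMod (p ^ 2))) ^ b‖ ≤
      if F.derivative.eval n * (p : ZMod (p ^ 2)) = 0 then (p : ℝ) else 0 := by
    intro n
    rw [norm_mul, AddChar.norm_apply, one_mul]
    split_ifs with h
    · rw [h]; simp
    · have hz : ψ (F.derivative.eval n * (p : ZMod (p ^ 2))) ≠ 1 := by
        intro h'
        apply h
        apply ZMod.injective_stdAddChar
        rw [AddChar.map_zero_eq_one]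
        exact h'
      have hzp : ψ (F.derivative.eval n * (p : ZMod (p ^ 2))) ^ p = 1 := by
        rw [← AddChar.map_nsmul_eq_pow, nsmul_eq_mul]
        have : (p : ZMod (p ^ 2)) * (F.derivative.eval n * (p : ZMod (p ^ 2)))
          = F.derivative.eval n * (p : ZMod (p ^ 2)) ^ 2 := by ring
        rw [this, hpp]; simp
      have := geom_sum_mul (ψ (F.derivative.eval n * (p : ZMod (p ^ 2)))) p
      rw [hzp, sub_self] at this
      rcases mul_eq_zero.1 this with h' | h'
      · rw [h']; simp
      · exact absurd (sub_eq_zero.1 h') hz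
  have h4 : (p : ℝ) * ‖∑ n : ZMod (p ^ 2), ψ (F.eval n)‖ ≤
      p * ((univ.filter fun n : ZMod (p ^ 2) =>
        F.derivative.eval n * (p : ZMod (p ^ 2)) = 0).card : ℝ) := by
    have : (p : ℝ) * ‖∑ n : ZMod (p ^ 2), ψ (F.eval n)‖ =
      ‖(p : ℂ) * ∑ n : ZMod (p ^ 2), ψ (F.eval n)‖ := by simp
    rw [this, h2]
    refine (norm_sum_le _ _).trans ((Finset.sum_le_sum fun n _ => h3 n).trans ?_)
    rw [← Finset.sum_filter]
    simp [mul_comm]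
  exact le_of_mul_le_mul_left h4 hp0

lemma card_crit (p : ℕ) [NeZero (p ^ 2)] (hp : p.Prime) (F : Polynomial (ZMod (p ^ 2))) (D : ℕ)
    (hD : F.natDegree ≤ D) (i : ℕ) (hi : 1 ≤ i) (hip : i < p) (hc : ¬ p ∣ (F.coeff i).val) :
    (univ.filter fun n : ZMod (p ^ 2) => F.derivative.eval n * (p : ZMod (p ^ 2)) = 0).card
      ≤ p * D := by
  have : Fact p.Prime := ⟨hp⟩
  have hdvd : p ∣ p ^ 2 := dvd_pow_self p two_ne_zero
  set φ : ZMod (p ^ 2) →+* ZMod p := ZMod.castHom hdvd (ZMod p) with hφ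
  have hφv : ∀ x : ZMod (p ^ 2), φ x = (x.val : ZMod p) := by
    intro x
    rw [hφ, ZMod.castHom_apply, ZMod.cast_eq_val]
  have hφ0 : ∀ x : ZMod (p ^ 2), φ x = 0 ↔ p ∣ x.val := by
    intro x
    rw [hφv, ZMod.natCast_eq_zero_iff]
  set G := (F.map φ).derivative with hG
  have hG0 : G ≠ 0 := by
    intro h
    have h1 : G.coeff (i - 1) = 0 := by rw [h]; simp
    rw [hG, Polynomial.coeff_derivative, Nat.sub_add_cancel hi, Polynomial.coeff_map] at h1
    rcases mul_eq_zero.1 h1 with h2 | h2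
    · exact hc ((hφ0 _).1 h2)
    · have : ((i : ℕ) : ZMod p) = 0 := by
        have e : ((i - 1 : ℕ) : ZMod p) + 1 = ((i - 1 + 1 : ℕ) : ZMod p) := by push_cast; rfl
        rw [e, Nat.sub_add_cancel hi] at h2
        exact h2
      rw [ZMod.natCast_eq_zero_iff] at this
      exact absurd (Nat.le_of_dvd hi this) (by omega)
  have hGD : G.roots.toFinset.card ≤ D := by
    refine (Multiset.toFinset_card_le _).trans ((Polynomial.card_roots' _).trans ?_)
    refine (Polynomial.natDegree_derivative_le _).trans ?_
    have := Polynomial.natDegree_map_le (f := φ) (p := F)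
    omega
  have hmap : ∀ n ∈ (univ.filter fun n : ZMod (p ^ 2) =>
      F.derivative.eval n * (p : ZMod (p ^ 2)) = 0), φ n ∈ G.roots.toFinset := by
    intro n hn
    have hn := (mem_filter.1 hn).2
    rw [Multiset.mem_toFinset, Polynomial.mem_roots hG0, Polynomial.IsRoot.def, hG,
      Polynomial.derivative_map, Polynomial.eval_map_apply, hφ0]
    set y := F.derivative.eval n
    have h1 : ((y.val * p : ℕ) : ZMod (p ^ 2)) = 0 := by
      rw [Nat.cast_mul, ZMod.natCast_zmod_val]; exact hn
    rw [ZMod.natCast_eq_zero_iff] at h1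
    exact Nat.dvd_of_mul_dvd_mul_right hp.pos ((dvd_of_eq (sq p).symm).trans h1)
  refine (Finset.card_le_mul_card_image_of_maps_to hmap p ?_).trans
    (Nat.mul_le_mul_left p hGD)
  intro r _
  calc _ ≤ (range p).card := by
        refine Finset.card_le_card_of_injOn (fun n => n.val / p) ?_ ?_
        · intro n _
          have := ZMod.val_lt n
          rw [Finset.mem_coe, mem_range]
          apply Nat.div_lt_of_lt_mul
          rwa [← sq]
        · intro a ha b hb hab
          have ha := (mem_filter.1 (Finset.mem_coe.1 ha)).2
          have hb := (mem_filter.1 (Finset.mem_coe.1 hb)).2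
          have : φ a = φ b := ha.trans hb.symm
          rw [hφv, hφv, ZMod.natCast_eq_natCast_iff'] at this
          apply ZMod.val_injective
          rw [← Nat.div_add_mod a.val p, ← Nat.div_add_mod b.val p, this]
          have hab : a.val / p = b.val / p := hab
          rw [hab]
    _ = p := card_range p

lemma expsum_bound (p : ℕ) [NeZero (p ^ 2)] (hp : p.Prime) {ι : Type*} [Fintype ι] [DecidableEq ι]
    (e : ι → ℕ) (he : Function.Injective e) (D : ℕ) (he1 : ∀ i, 1 ≤ e i) (heD : ∀ i, e i ≤ D)
    (h : ι → ZMod (p ^ 2)) (i : ι) (hi : ¬ p ∣ (h i).val) :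
    ‖∑ n : ZMod (p ^ 2), (ZMod.stdAddChar (N := p ^ 2)) (∑ i, h i * n ^ e i)‖ ≤ p * D := by
  rcases lt_or_ge D p with hDp | hDp
  · let F : Polynomial (ZMod (p ^ 2)) := ∑ i, Polynomial.C (h i) * Polynomial.X ^ e i
    have hF : ∀ n, F.eval n = ∑ i, h i * n ^ e i := by
      intro n
      simp [F, Polynomial.eval_finsetSum]
    have hdeg : F.natDegree ≤ D := by
      refine Polynomial.natDegree_sum_le_of_forall_le _ _ fun i _ => ?_
      exact (Polynomial.natDegree_C_mul_X_pow_le _ _).trans (heD i)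
    have hcoeff : F.coeff (e i) = h i := by
      simp only [F, Polynomial.finsetSum_coeff, Polynomial.coeff_C_mul_X_pow]
      rw [Finset.sum_eq_single i]
      · simp
      · intro b _ hb
        rw [if_neg]
        intro hh
        exact hb (he hh).symm
      · simp
    have h1 := expsum_le_card p hp F
    have h2 := card_crit p hp F D hdeg (e i) (he1 i) (lt_of_le_of_lt (heD i) hDp)
      (by rwa [hcoeff])
    simp only [hF] at h1
    refine h1.trans ?_
    exact_mod_cast h2
  · refine (norm_sum_le _ _).trans ?_
    simp only [AddChar.norm_apply, sum_const, card_univ, ZMod.card, nsmul_eq_mul, mul_one]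
    have : p ^ 2 ≤ p * D := by rw [sq]; exact Nat.mul_le_mul_left _ hDp
    exact_mod_cast this

/-! ### Discrepancy bound on the grid -/

lemma addChar_sum {A : Type*} [AddCommMonoid A] (ψ : AddChar A ℂ) {ι : Type*} (s : Finset ι)
    (f : ι → A) : ψ (∑ i ∈ s, f i) = ∏ i ∈ s, ψ (f i) := by
  classical
  induction s using Finset.induction_on with
  | empty => simp
  | insert a s ha ih => rw [Finset.sum_insert ha, Finset.prod_insert ha, AddChar.map_add_eq_mul, ih]

lemma grid_disc (p : ℕ) [NeZero (p ^ 2)] (hp : p.Prime) {ι : Type*} [Fintype ι] [DecidableEq ι]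
    (e : ι → ℕ) (he : Function.Injective e) (D : ℕ) (he1 : ∀ i, 1 ≤ e i) (heD : ∀ i, e i ≤ D)
    (hD : 1 ≤ D) (m : ι → ℕ) (hm : ∀ i, m i ≤ p ^ 2) :
    |((univ.filter fun n : ZMod (p ^ 2) => ∀ i, (n ^ e i).val < m i).card : ℝ) / (p ^ 2 : ℕ)
      - ∏ i, ((m i : ℝ) / (p ^ 2 : ℕ))| ≤
      (D : ℝ) / p * (3 + 3 * Real.log p) ^ Fintype.card ι := by
  set ψ := (ZMod.stdAddChar (N := p ^ 2)) with hψ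
  have hp0 : (0 : ℝ) < p := by exact_mod_cast hp.pos
  have hN : (((p ^ 2 : ℕ)) : ℂ) ≠ 0 := by exact_mod_cast NeZero.ne (p ^ 2)
  let S : (ι → ZMod (p ^ 2)) → ℂ := fun h => ∑ n : ZMod (p ^ 2), ψ (∑ i, h i * n ^ e i)
  have hcount : ((univ.filter fun n : ZMod (p ^ 2) => ∀ i, (n ^ e i).val < m i).card : ℂ)
      = ∑ h : ι → ZMod (p ^ 2), (∏ i, cf (p ^ 2) (m i) (h i)) * S h := by
    have h1 : ((univ.filter fun n : ZMod (p ^ 2) => ∀ i, (n ^ e i).val < m i).card : ℂ)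
        = ∑ n : ZMod (p ^ 2), ∏ i, (if (n ^ e i).val < m i then (1 : ℂ) else 0) := by
      rw [Finset.card_filter]
      push_cast
      refine Finset.sum_congr rfl fun n _ => ?_
      rw [Finset.prod_ite_zero]
      simp
    rw [h1]
    simp only [S, Finset.mul_sum]
    rw [Finset.sum_comm]
    refine Finset.sum_congr rfl fun n _ => ?_
    rw [Finset.prod_congr rfl (fun i _ => cf_inv (p ^ 2) (m i) (hm i) (n ^ e i)),
      Finset.prod_univ_sum, Fintype.piFinset_univ]
    refine Finset.sum_congr rfl fun h _ => ?_
    rw [Finset.prod_mul_distrib, addChar_sum]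
  have hS0 : S 0 = ((p ^ 2 : ℕ) : ℂ) := by simp [S]
  have hdiff : ((((univ.filter fun n : ZMod (p ^ 2) => ∀ i, (n ^ e i).val < m i).card : ℝ) /
      (p ^ 2 : ℕ) - ∏ i, ((m i : ℝ) / (p ^ 2 : ℕ)) : ℝ) : ℂ)
      = (1 / ((p ^ 2 : ℕ) : ℂ)) * ∑ h ∈ univ.erase (0 : ι → ZMod (p ^ 2)),
        (∏ i, cf (p ^ 2) (m i) (h i)) * S h := by
    rw [Finset.sum_erase_eq_sub (mem_univ _), ← hcount, hS0, mul_sub]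
    have : ∏ i, cf (p ^ 2) (m i) ((0 : ι → ZMod (p ^ 2)) i) = ∏ i, ((m i : ℂ) / (p ^ 2 : ℕ)) :=
      Finset.prod_congr rfl fun i _ => by rw [Pi.zero_apply, cf_zero]
    rw [this]
    push_cast
    push_cast at hN
    field_simp
    rw [sub_div, mul_div_cancel_left₀ _ hN]
  rw [← Real.norm_eq_abs, ← Complex.norm_real, hdiff, norm_mul]
  have hn1 : ‖1 / ((p ^ 2 : ℕ) : ℂ)‖ = 1 / (p : ℝ) ^ 2 := by simp
  rw [hn1]
  have hterm : ∀ h ∈ univ.erase (0 : ι → ZMod (p ^ 2)),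
      ‖(∏ i, cf (p ^ 2) (m i) (h i)) * S h‖ ≤ (∏ i, gm p (h i)) * (p * D) := by
    intro h hh
    have hh0 : h ≠ 0 := (mem_erase.1 hh).1
    have hg0 : 0 ≤ ∏ i, gm p (h i) := Finset.prod_nonneg fun i _ => gm_nonneg p _
    have hcg : ∏ i, ‖cf (p ^ 2) (m i) (h i)‖ ≤ ∏ i, gm p (h i) :=
      Finset.prod_le_prod (fun i _ => norm_nonneg _)
        fun i _ => cf_le_gm p hp.one_le (m i) (hm i) (h i)
    rw [norm_mul, norm_prod]
    by_cases hall : ∃ i, ¬ p ∣ (h i).val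
    · obtain ⟨i, hi⟩ := hall
      exact mul_le_mul hcg (expsum_bound p hp e he D he1 heD h i hi) (norm_nonneg _) hg0
    · push Not at hall
      obtain ⟨i, hi⟩ : ∃ i, h i ≠ 0 := by
        by_contra hcon
        push Not at hcon
        exact hh0 (funext hcon)
      have hS : ‖S h‖ ≤ (p : ℝ) ^ 2 := by
        refine (norm_sum_le _ _).trans ?_
        simp [AddChar.norm_apply]
      have hi2 : p * ‖cf (p ^ 2) (m i) (h i)‖ ≤ gm p (h i) := by
        unfold gm
        rw [if_neg hi, if_pos (hall i)]
        gcongr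
        exact cf_norm _ _ _ hi
      have hprod : p * ∏ i, ‖cf (p ^ 2) (m i) (h i)‖ ≤ ∏ i, gm p (h i) := by
        rw [← Finset.mul_prod_erase univ _ (mem_univ i),
          ← Finset.mul_prod_erase univ (fun i => gm p (h i)) (mem_univ i), ← mul_assoc]
        refine mul_le_mul hi2 ?_ (Finset.prod_nonneg fun i _ => norm_nonneg _) (gm_nonneg p _)
        exact Finset.prod_le_prod (fun i _ => norm_nonneg _)
          fun i _ => cf_le_gm p hp.one_le (m i) (hm i) (h i)
      have hD' : (1 : ℝ) ≤ D := by exact_mod_cast hD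
      have hc0 : 0 ≤ ∏ i, ‖cf (p ^ 2) (m i) (h i)‖ := Finset.prod_nonneg fun i _ => norm_nonneg _
      calc _ ≤ (∏ i, ‖cf (p ^ 2) (m i) (h i)‖) * (p : ℝ) ^ 2 := by gcongr
        _ = (p * ∏ i, ‖cf (p ^ 2) (m i) (h i)‖) * (p * 1) := by ring
        _ ≤ _ := by gcongr
  have hsum : ‖∑ h ∈ univ.erase (0 : ι → ZMod (p ^ 2)), (∏ i, cf (p ^ 2) (m i) (h i)) * S h‖
      ≤ (3 + 3 * Real.log p) ^ Fintype.card ι * (p * D) := by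
    refine (norm_sum_le _ _).trans ((Finset.sum_le_sum hterm).trans ?_)
    rw [← Finset.sum_mul]
    gcongr
    calc _ ≤ ∑ h : ι → ZMod (p ^ 2), ∏ i, gm p (h i) :=
          Finset.sum_le_sum_of_subset_of_nonneg (Finset.erase_subset _ _)
            fun h _ _ => Finset.prod_nonneg fun i _ => gm_nonneg p _
      _ = ∏ _i : ι, ∑ h : ZMod (p ^ 2), gm p h := by
          rw [Finset.prod_univ_sum, Fintype.piFinset_univ]
      _ = (∑ h : ZMod (p ^ 2), gm p h) ^ Fintype.card ι := by
          rw [Finset.prod_const, card_univ]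
      _ ≤ _ := by
          apply pow_le_pow_left₀ (Finset.sum_nonneg fun h _ => gm_nonneg p h)
          exact sum_gm p hp.one_le
  calc _ ≤ 1 / (p : ℝ) ^ 2 * ((3 + 3 * Real.log p) ^ Fintype.card ι * (p * D)) := by gcongr
    _ = _ := by field_simp

lemma prod_subset_le {ι : Type*} {s t : Finset ι} {f : ι → ℝ} (hst : s ⊆ t)
    (h0 : ∀ i ∈ s, 0 ≤ f i) (h1 : ∀ i ∈ t, i ∉ s → 1 ≤ f i) :
    ∏ i ∈ s, f i ≤ ∏ i ∈ t, f i := by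
  classical
  rw [← Finset.prod_sdiff hst]
  refine le_mul_of_one_le_left (Finset.prod_nonneg h0) ?_
  calc (1 : ℝ) = ∏ _i ∈ t \ s, (1 : ℝ) := by simp
    _ ≤ _ := Finset.prod_le_prod (fun _ _ => zero_le_one) fun i hi =>
      h1 i (mem_sdiff.1 hi).1 (mem_sdiff.1 hi).2

lemma abs_prod_sub_prod_le' {ι : Type*} (s : Finset ι) (a b : ι → ℝ) (ε : ℝ)
    (ha : ∀ i ∈ s, 0 ≤ a i ∧ a i ≤ 1) (hb : ∀ i ∈ s, 0 ≤ b i ∧ b i ≤ 1)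
    (hab : ∀ i ∈ s, |a i - b i| ≤ ε) :
    |∏ i ∈ s, a i - ∏ i ∈ s, b i| ≤ s.card * ε := by
  classical
  induction s using Finset.induction_on with
  | empty => simp
  | insert i s hi ih =>
    rw [Finset.prod_insert hi, Finset.prod_insert hi, Finset.card_insert_of_notMem hi]
    have ih := ih (fun j hj => ha j (mem_insert_of_mem hj)) (fun j hj => hb j (mem_insert_of_mem hj))
      (fun j hj => hab j (mem_insert_of_mem hj))
    have h1 := ha i (mem_insert_self _ _)
    have h2 := hab i (mem_insert_self _ _)
    have h3 : 0 ≤ ∏ j ∈ s, b j := Finset.prod_nonneg fun j hj => (hb j (mem_insert_of_mem hj)).1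
    have h4 : ∏ j ∈ s, b j ≤ 1 := Finset.prod_le_one (fun j hj => (hb j (mem_insert_of_mem hj)).1)
      fun j hj => (hb j (mem_insert_of_mem hj)).2
    have e : a i * ∏ j ∈ s, a j - b i * ∏ j ∈ s, b j
      = a i * (∏ j ∈ s, a j - ∏ j ∈ s, b j) + (a i - b i) * ∏ j ∈ s, b j := by ring
    rw [e]
    refine (abs_add_le _ _).trans ?_
    rw [abs_mul, abs_mul, abs_of_nonneg h1.1, abs_of_nonneg h3]
    push_cast
    have := abs_nonneg (a i - b i)
    have := abs_nonneg (∏ j ∈ s, a j - ∏ j ∈ s, b j)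
    nlinarith

lemma localDisc_korobovQ (p s : ℕ) (hp : p.Prime) (u : Finset (Fin s)) (M : Fin s) (hM : M ∈ u)
    (hmax : ∀ j ∈ u, j ≤ M) (z : Fin s → ℝ) (hz : ∀ j, z j ∈ Set.Icc (0 : ℝ) 1) :
    |localDisc (korobovQ p s) (projPoint u z)| ≤
      2 * ((M.1 + 1 : ℕ) : ℝ) / p * (3 + 3 * Real.log p) ^ u.card := by
  have : NeZero (p ^ 2) := ⟨pow_ne_zero 2 hp.ne_zero⟩
  have hp0 : (0 : ℝ) < p := by exact_mod_cast hp.pos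
  have hN0 : (0 : ℝ) < (p ^ 2 : ℕ) := by exact_mod_cast pow_pos hp.pos 2
  let m : Fin s → ℕ := fun j => ⌈((p ^ 2 : ℕ) : ℝ) * z j⌉₊
  have hm : ∀ j, m j ≤ p ^ 2 := by
    intro j
    apply Nat.ceil_le.2
    nlinarith [(hz j).2]
  have hgrid := grid_disc p hp (ι := u) (fun j => j.1.1 + 1)
    (by
      intro a b hab
      apply Subtype.ext
      apply Fin.ext
      simpa using hab)
    (M.1 + 1) (by intro i; omega)
    (by
      intro i
      have : i.1 ≤ M := hmax i.1 i.2
      have : i.1.1 ≤ M.1 := this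
      omega) (by omega) (fun j => m j.1) (fun j => hm j.1)
  have hcard : (univ.filter fun n : Fin (p ^ 2) =>
      ∀ j, korobovQ p s n j < projPoint u z j).card =
      (univ.filter fun n : ZMod (p ^ 2) => ∀ i : u, (n ^ (i.1.1 + 1)).val < m i.1).card := by
    have hiff : ∀ n : Fin (p ^ 2), (∀ j, korobovQ p s n j < projPoint u z j) ↔
        ∀ i : u, (((n.1 : ℕ) : ZMod (p ^ 2)) ^ (i.1.1 + 1)).val < m i.1 := by
      intro n
      have hq : ∀ j, korobovQ p s n j = ((n.1 ^ (j.1 + 1) % p ^ 2 : ℕ) : ℝ) / (p ^ 2 : ℕ) := by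
        intro j
        rw [← Int.fract_div_natCast_eq_div_natCast_mod]
        simp [korobovQ]
      have hv : ∀ j : Fin s, (((n.1 : ℕ) : ZMod (p ^ 2)) ^ (j.1 + 1)).val
          = n.1 ^ (j.1 + 1) % p ^ 2 := by
        intro j
        rw [← Nat.cast_pow, ZMod.val_natCast]
      have hj : ∀ j : Fin s, korobovQ p s n j < z j ↔
          (((n.1 : ℕ) : ZMod (p ^ 2)) ^ (j.1 + 1)).val < m j := by
        intro j
        rw [hv, hq, div_lt_iff₀ hN0, Nat.lt_ceil, mul_comm]
      constructor
      · intro h i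
        rw [← hj]
        have := h i.1
        rwa [projPoint, if_pos i.2] at this
      · intro h j
        rw [projPoint]
        split_ifs with hju
        · exact (hj j).2 (h ⟨j, hju⟩)
        · exact Int.fract_lt_one _
    refine Finset.card_bij (fun n _ => ((n.1 : ℕ) : ZMod (p ^ 2))) ?_ ?_ ?_
    · intro n hn
      rw [mem_filter] at hn ⊢
      exact ⟨mem_univ _, (hiff n).1 hn.2⟩
    · intro a _ b _ hab
      have := congrArg ZMod.val hab
      rw [ZMod.val_cast_of_lt a.2, ZMod.val_cast_of_lt b.2] at this
      exact Fin.ext this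
    · intro b hb
      refine ⟨⟨b.val, ZMod.val_lt b⟩, ?_, ZMod.natCast_zmod_val b⟩
      rw [mem_filter] at hb ⊢
      refine ⟨mem_univ _, (hiff _).2 ?_⟩
      simp only [ZMod.natCast_zmod_val]
      exact hb.2
  have hprod : ∏ j, projPoint u z j = ∏ j ∈ u, z j := by
    simp [projPoint, Finset.prod_ite_mem]
  have hprod2 : ∏ i : u, ((m i.1 : ℝ) / (p ^ 2 : ℕ)) = ∏ j ∈ u, ((m j : ℝ) / (p ^ 2 : ℕ)) :=
    Finset.prod_coe_sort u (fun j => (m j : ℝ) / (p ^ 2 : ℕ))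
  have hdiff : |∏ j ∈ u, ((m j : ℝ) / (p ^ 2 : ℕ)) - ∏ j ∈ u, z j| ≤
      u.card * (1 / (p ^ 2 : ℕ)) := by
    apply abs_prod_sub_prod_le'
    · intro j _
      refine ⟨by positivity, ?_⟩
      rw [div_le_one hN0]
      exact_mod_cast hm j
    · intro j _; exact hz j
    · intro j _
      have h1 : ((p ^ 2 : ℕ) : ℝ) * z j ≤ m j := Nat.le_ceil _
      have h2 : (m j : ℝ) < ((p ^ 2 : ℕ) : ℝ) * z j + 1 :=
        Nat.ceil_lt_add_one (mul_nonneg hN0.le (hz j).1)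
      have e : (m j : ℝ) / (p ^ 2 : ℕ) - z j
        = (m j - ((p ^ 2 : ℕ) : ℝ) * z j) / (p ^ 2 : ℕ) := by field_simp
      rw [e, abs_div, abs_of_pos hN0]
      gcongr
      rw [abs_le]; constructor <;> linarith
  have hucard : u.card ≤ M.1 + 1 := by
    have : u.image (fun j => j.1) ⊆ range (M.1 + 1) := by
      intro x hx
      obtain ⟨j, hj, rfl⟩ := mem_image.1 hx
      have : j.1 ≤ M.1 := hmax j hj
      exact mem_range.2 (by omega)
    have := Finset.card_le_card this
    rwa [Finset.card_image_of_injective _ Fin.val_injective, card_range] at this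
  have hlog : 0 ≤ Real.log p := Real.log_nonneg (by exact_mod_cast hp.one_le)
  have hL : 1 ≤ (3 + 3 * Real.log p) ^ u.card := one_le_pow₀ (by linarith)
  have hd2 : (u.card : ℝ) * (1 / (p ^ 2 : ℕ)) ≤
      ((M.1 + 1 : ℕ) : ℝ) / p * (3 + 3 * Real.log p) ^ u.card := by
    calc (u.card : ℝ) * (1 / (p ^ 2 : ℕ)) ≤ ((M.1 + 1 : ℕ) : ℝ) * (1 / p) := by
          gcongr
          exact_mod_cast Nat.le_self_pow two_ne_zero p
      _ = ((M.1 + 1 : ℕ) : ℝ) / p * 1 := by ring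
      _ ≤ _ := by gcongr
  rw [Fintype.card_coe, hprod2] at hgrid
  rw [localDisc, hcard, hprod]
  have := abs_sub_le
    (((univ.filter fun n : ZMod (p ^ 2) => ∀ i : u, (n ^ (i.1.1 + 1)).val < m i.1).card : ℝ) /
      (p ^ 2 : ℕ)) (∏ j ∈ u, ((m j : ℝ) / (p ^ 2 : ℕ))) (∏ j ∈ u, z j)
  refine this.trans ((add_le_add hgrid (hdiff.trans hd2)).trans (le_of_eq ?_))
  ring

lemma weight_bound (γ : ℕ → ℝ) (hγ : ∀ j, 1 ≤ j → 0 ≤ γ j)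
    (hdec : ∀ j, 1 ≤ j → γ (j + 1) ≤ γ j)
    (hsum : Summable fun j => γ (j + 1)) (s : ℕ) (u : Finset (Fin s)) (M : Fin s) (hM : M ∈ u)
    (L : ℝ) (hL : 0 ≤ L) :
    weightOf γ u * ((M.1 + 1 : ℕ) : ℝ) * L ^ u.card ≤
      (∑' j, γ (j + 1)) * L * ∏ j ∈ range s, (1 + γ (j + 1) * L) := by
  have hγ' : ∀ j, 0 ≤ γ (j + 1) := fun j => hγ _ (by omega)
  have hanti : Antitone fun j => γ (j + 1) := antitone_nat_of_succ_le fun j => hdec _ (by omega)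
  have h1 : ((M.1 + 1 : ℕ) : ℝ) * γ (M.1 + 1) ≤ ∑' j, γ (j + 1) := by
    refine le_trans ?_ (hsum.sum_le_tsum (range (M.1 + 1)) fun j _ => hγ' j)
    have : ∑ j ∈ range (M.1 + 1), γ (M.1 + 1) ≤ ∑ j ∈ range (M.1 + 1), γ (j + 1) :=
      Finset.sum_le_sum fun j hj => hanti (by have := mem_range.1 hj; omega)
    simpa using this
  have h2 : ∏ j ∈ u.erase M, (γ (j.1 + 1) * L) ≤ ∏ j ∈ range s, (1 + γ (j + 1) * L) := by
    calc _ ≤ ∏ j ∈ u.erase M, (1 + γ (j.1 + 1) * L) := by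
          refine Finset.prod_le_prod (fun j _ => mul_nonneg (hγ' _) hL) fun j _ => by linarith
      _ ≤ ∏ j : Fin s, (1 + γ (j.1 + 1) * L) := by
          refine prod_subset_le (subset_univ _) ?_ ?_
          · intro j _
            have := mul_nonneg (hγ' j.1) hL
            linarith
          · intro j _ _
            have := mul_nonneg (hγ' j.1) hL
            linarith
      _ = _ := Fin.prod_univ_eq_prod_range (fun j => 1 + γ (j + 1) * L) s
  have e : weightOf γ u * ((M.1 + 1 : ℕ) : ℝ) * L ^ u.card =
      (((M.1 + 1 : ℕ) : ℝ) * γ (M.1 + 1)) * L * ∏ j ∈ u.erase M, (γ (j.1 + 1) * L) := by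
    have : weightOf γ u * L ^ u.card = ∏ j ∈ u, (γ (j.1 + 1) * L) := by
      rw [Finset.prod_mul_distrib, Finset.prod_const, weightOf]
    rw [mul_right_comm, this, ← Finset.mul_prod_erase u _ hM]
    ring
  rw [e]
  have h3 : 0 ≤ ∏ j ∈ u.erase M, (γ (j.1 + 1) * L) :=
    Finset.prod_nonneg fun j _ => mul_nonneg (hγ' _) hL
  have h4 : 0 ≤ ∑' j, γ (j + 1) := tsum_nonneg hγ'
  gcongr

lemma prod_tail_bound (g : ℕ → ℝ) (hg : ∀ j, 0 ≤ g j) (hsum : Summable g) (δ : ℝ) (hδ : 0 < δ) :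
    ∃ C : ℝ, 0 < C ∧ ∀ p s : ℕ, 1 ≤ p →
      (∑' j, g j) * (3 + 3 * Real.log p) * ∏ j ∈ range s, (1 + g j * (3 + 3 * Real.log p)) ≤
        C * (p : ℝ) ^ δ := by
  set Γ := ∑' j, g j with hΓ
  have hΓ0 : 0 ≤ Γ := tsum_nonneg hg
  obtain ⟨J, hJ⟩ : ∃ J, ∑' j, g (j + J) < δ / 6 := by
    have := tendsto_sum_nat_add g
    exact ((tendsto_order.1 this).2 (δ / 6) (by positivity)).exists
  set ε := δ / (2 * (J + 1)) with hε
  have hε0 : 0 < ε := by positivity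
  set K := 1 + Γ * (3 + 3 / ε) with hK
  have hK0 : 0 < K := by positivity
  refine ⟨K ^ (J + 1) * Real.exp (δ / 2), by positivity, ?_⟩
  intro p s hp
  have hp1 : (1 : ℝ) ≤ p := by exact_mod_cast hp
  have hp0 : (0 : ℝ) < p := by linarith
  have hlog : 0 ≤ Real.log p := Real.log_nonneg hp1
  set L := 3 + 3 * Real.log p with hL
  have hL0 : 0 ≤ L := by positivity
  have hpe : 1 ≤ (p : ℝ) ^ ε := Real.one_le_rpow hp1 hε0.le
  have hLle : L ≤ (3 + 3 / ε) * (p : ℝ) ^ ε := by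
    have := Real.log_le_rpow_div hp0.le hε0
    have e : (3 + 3 / ε) * (p : ℝ) ^ ε = 3 * (p : ℝ) ^ ε + 3 * ((p : ℝ) ^ ε / ε) := by ring
    rw [e]
    linarith
  have hKL : 1 + Γ * L ≤ K * (p : ℝ) ^ ε := by
    have := mul_le_mul_of_nonneg_left hLle hΓ0
    rw [hK]
    nlinarith
  have hgΓ : ∀ j, g j ≤ Γ := fun j => hsum.le_tsum j fun i _ => hg i
  have hone : ∀ j, 1 ≤ 1 + g j * L := fun j => by
    have := mul_nonneg (hg j) hL0
    linarith
  have hprod : ∏ j ∈ range s, (1 + g j * L) ≤ (1 + Γ * L) ^ J * Real.exp (δ / 6 * L) := by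
    calc _ ≤ ∏ j ∈ range (J + s), (1 + g j * L) :=
          prod_subset_le
            (range_subset_range.2 (by omega))
            (fun j _ => by linarith [hone j]) (fun j _ _ => hone j)
      _ = (∏ j ∈ range J, (1 + g j * L)) * ∏ j ∈ range s, (1 + g (J + j) * L) :=
          Finset.prod_range_add _ _ _
      _ ≤ _ := by
          have h1 : ∏ j ∈ range J, (1 + g j * L) ≤ (1 + Γ * L) ^ J := by
            calc _ ≤ ∏ _j ∈ range J, (1 + Γ * L) := by
                  refine Finset.prod_le_prod (fun j _ => by linarith [hone j]) fun j _ => ?_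
                  have := mul_le_mul_of_nonneg_right (hgΓ j) hL0
                  linarith
              _ = _ := by simp
          have h2 : ∏ j ∈ range s, (1 + g (J + j) * L) ≤ Real.exp (δ / 6 * L) := by
            calc _ ≤ ∏ j ∈ range s, Real.exp (g (J + j) * L) := by
                  refine Finset.prod_le_prod (fun j _ => by linarith [hone (J + j)]) fun j _ => ?_
                  rw [add_comm]
                  exact Real.add_one_le_exp _
              _ = Real.exp ((∑ j ∈ range s, g (J + j)) * L) := by
                  rw [← Real.exp_sum, Finset.sum_mul]
              _ ≤ _ := by
                  gcongr
                  refine le_trans ?_ hJ.le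
                  have hs' : Summable fun j => g (j + J) := (summable_nat_add_iff J).2 hsum
                  have := hs'.sum_le_tsum (range s) fun j _ => hg _
                  simpa only [add_comm] using this
          have h3 : 0 ≤ ∏ j ∈ range s, (1 + g (J + j) * L) :=
            Finset.prod_nonneg fun j _ => by linarith [hone (J + j)]
          exact mul_le_mul h1 h2 h3 (by positivity)
  have hexp : Real.exp (δ / 6 * L) = Real.exp (δ / 2) * (p : ℝ) ^ (δ / 2) := by
    rw [Real.rpow_def_of_pos hp0, ← Real.exp_add, hL]
    congr 1
    ring
  have hpow : ((p : ℝ) ^ ε) ^ (J + 1) = (p : ℝ) ^ (δ / 2) := by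
    rw [← Real.rpow_natCast, ← Real.rpow_mul hp0.le, hε]
    congr 1
    push_cast
    field_simp
  have hpp : (p : ℝ) ^ (δ / 2) * (p : ℝ) ^ (δ / 2) = (p : ℝ) ^ δ := by
    rw [← Real.rpow_add hp0]; congr 1; ring
  calc Γ * L * ∏ j ∈ range s, (1 + g j * L)
      ≤ (1 + Γ * L) * ((1 + Γ * L) ^ J * Real.exp (δ / 6 * L)) := by
        have : 0 ≤ ∏ j ∈ range s, (1 + g j * L) :=
          Finset.prod_nonneg fun j _ => by linarith [hone j]
        refine mul_le_mul (by linarith) hprod this (by positivity)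
    _ = (1 + Γ * L) ^ (J + 1) * Real.exp (δ / 6 * L) := by ring
    _ ≤ (K * (p : ℝ) ^ ε) ^ (J + 1) * Real.exp (δ / 6 * L) := by gcongr
    _ = K ^ (J + 1) * Real.exp (δ / 2) * ((p : ℝ) ^ (δ / 2) * (p : ℝ) ^ (δ / 2)) := by
        rw [mul_pow, hpow, hexp]; ring
    _ = _ := by rw [hpp]

/-- for non-increasing, summable, nonnegative weights and any `δ > 0`,
`D*_γ(Q_{p²,s}) ≤ C p^{−(1−δ)}` with `C` independent of the prime `p` and of `s`. -/
theorem wStarDisc_korobovQ_le (γ : ℕ → ℝ) (hγ : ∀ j, 1 ≤ j → 0 ≤ γ j)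
    (hdec : ∀ j, 1 ≤ j → γ (j + 1) ≤ γ j)
    (hsum : Summable fun j => γ (j + 1)) (δ : ℝ) (hδ : 0 < δ) :
    ∃ C : ℝ, 0 < C ∧ ∀ p s : ℕ, p.Prime → 1 ≤ s →
      wStarDisc γ (korobovQ p s) ≤ C * (p : ℝ) ^ (-(1 - δ) : ℝ) := by
  obtain ⟨C, hC, hb⟩ := prod_tail_bound (fun j => γ (j + 1)) (fun j => hγ _ (by omega)) hsum δ hδ
  refine ⟨2 * C, by positivity, ?_⟩
  intro p s hp _
  have hp0 : (0 : ℝ) < p := by exact_mod_cast hp.pos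
  have hlog : 0 ≤ Real.log p := Real.log_nonneg (by exact_mod_cast hp.one_le)
  unfold wStarDisc
  apply Real.sSup_le
  · rintro d ⟨z, hz, u, hu, rfl⟩
    have h1 := localDisc_korobovQ p s hp u (u.max' hu) (u.max'_mem hu)
      (fun j hj => u.le_max' j hj) z hz
    have h2 := weight_bound γ hγ hdec hsum s u (u.max' hu) (u.max'_mem hu)
      (3 + 3 * Real.log p) (by positivity)
    have h3 := hb p s hp.one_le
    have hw : 0 ≤ weightOf γ u := Finset.prod_nonneg fun j _ => hγ _ (by omega)
    have e : (p : ℝ) ^ (-(1 - δ) : ℝ) = (p : ℝ) ^ δ / p := by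
      rw [neg_sub, Real.rpow_sub hp0, Real.rpow_one]
    rw [e]
    calc _ ≤ weightOf γ u * (2 * (((u.max' hu).1 + 1 : ℕ) : ℝ) / p *
          (3 + 3 * Real.log p) ^ u.card) := by gcongr
      _ = 2 / p * (weightOf γ u * (((u.max' hu).1 + 1 : ℕ) : ℝ) *
          (3 + 3 * Real.log p) ^ u.card) := by ring
      _ ≤ 2 / p * (C * (p : ℝ) ^ δ) := 
          mul_le_mul_of_nonneg_left (h2.trans h3) (by positivity)
      _ = _ := by ring
  · positivity
end

section
/- Let γ = (γ_j)_{j≥1} be non-increasing nonnegative weights with ∑_{j≥1} γ_j < ∞, and let δ > 0. Then there exists a constant C > 0 (depending only on γ and δ, independent of p and s) such that for every prime p and every s ∈ ℕ the Hua–Wang multi-set R_{p²,s} (counted with multiplicity) satisfies D*_γ(R_{p²,s}) ≤ C·p^{−(1−δ)}. -/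
open Finset

namespace HuaWang

/-- Fourier coefficient of the indicator of `{0,…,m-1}` on `ZMod p`. -/
noncomputable def fc (p : ℕ) [NeZero p] (m : ℕ) (h : ZMod p) : ℂ :=
  (1 / (p : ℂ)) * ∑ d ∈ range m, ZMod.stdAddChar (-(h * (d : ZMod p)))

lemma indicator_eq (p : ℕ) [NeZero p] (m : ℕ) (hm : m ≤ p) (b : ZMod p) :
    (if b.val < m then (1 : ℂ) else 0) = ∑ h : ZMod p, fc p m h * ZMod.stdAddChar (h * b) := by
  have hp : (p : ℂ) ≠ 0 := by exact_mod_cast NeZero.ne p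
  have h1 : ∀ h : ZMod p, fc p m h * ZMod.stdAddChar (h * b) =
      (1 / (p : ℂ)) * ∑ d ∈ range m, ZMod.stdAddChar (h * (b - (d : ZMod p))) := by
    intro h
    unfold fc
    rw [mul_assoc, sum_mul]
    congr 1
    refine sum_congr rfl fun d _ => ?_
    rw [← AddChar.map_add_eq_mul]
    congr 1
    ring
  simp_rw [h1]
  rw [← mul_sum, sum_comm]
  simp_rw [AddChar.sum_mulShift _ (ZMod.isPrimitive_stdAddChar p)]
  have h2 : ∀ d ∈ range m, (((if b - (d : ZMod p) = 0 then Fintype.card (ZMod p) else 0 : ℕ)) : ℂ)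
      = if b.val = d then (p : ℂ) else 0 := by
    intro d hd
    have hd' : d < p := lt_of_lt_of_le (mem_range.1 hd) hm
    have : (b - (d : ZMod p) = 0) ↔ b.val = d := by
      rw [sub_eq_zero]
      constructor
      · rintro rfl
        exact ZMod.val_cast_of_lt hd'
      · rintro rfl
        simp
    simp [this, ZMod.card]
  rw [sum_congr rfl h2, sum_ite_eq]
  simp only [mem_range]
  split_ifs
  · field_simp
  · simp

lemma fc_zero (p : ℕ) [NeZero p] (m : ℕ) : fc p m 0 = (m : ℂ) / p := by
  simp [fc]
  ring

lemma norm_fc_zero_le (p : ℕ) [NeZero p] (m : ℕ) (hm : m ≤ p) : ‖fc p m 0‖ ≤ 1 := by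
  rw [fc_zero]
  simp only [norm_div, Complex.norm_natCast]
  apply div_le_one_of_le₀ (by exact_mod_cast hm) (by positivity)

lemma sin_lower (p v : ℕ) (hv : 0 < v) (hvp : v < p) :
    1 / Real.sin (Real.pi * v / p) ≤ p / 2 * (1 / v + 1 / ((p : ℝ) - v)) := by
  have hv' : (0 : ℝ) < v := by exact_mod_cast hv
  have hvp' : (v : ℝ) < p := by exact_mod_cast hvp
  have hp : (0 : ℝ) < p := by linarith
  have hd : (0 : ℝ) < (p : ℝ) - v := by linarith
  have key : ∀ x : ℝ, 0 < x → x ≤ p / 2 →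
      1 / Real.sin (Real.pi * x / p) ≤ p / 2 * (1 / x) := by
    intro x hx hx2
    have h1 := Real.mul_le_sin (x := Real.pi * x / p) (by positivity)
      (by rw [div_le_div_iff₀ hp (by norm_num)]; nlinarith [Real.pi_pos])
    have h2 : 2 / Real.pi * (Real.pi * x / p) = 2 * x / p := by
      field_simp
    rw [h2] at h1
    calc 1 / Real.sin (Real.pi * x / p) ≤ 1 / (2 * x / p) :=
          one_div_le_one_div_of_le (by positivity) h1
      _ = p / 2 * (1 / x) := by field_simp
  rcases le_total (v : ℝ) (p / 2) with h | h
  · refine (key v hv' h).trans ?_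
    have : (0 : ℝ) ≤ 1 / ((p : ℝ) - v) := by positivity
    gcongr
    linarith
  · have h3 := key (p - v) hd (by linarith)
    have h4 : Real.pi * ((p : ℝ) - v) / p = Real.pi - Real.pi * v / p := by
      field_simp
    rw [h4, Real.sin_pi_sub] at h3
    refine h3.trans ?_
    have : (0 : ℝ) ≤ 1 / (v : ℝ) := by positivity
    gcongr
    linarith

lemma norm_fc_le (p : ℕ) [NeZero p] (m : ℕ) (h : ZMod p) (hh : h ≠ 0) :
    ‖fc p m h‖ ≤ (1 / (h.val : ℝ) + 1 / ((p : ℝ) - h.val)) / 2 := by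
  have hv : 0 < h.val := by
    rw [Nat.pos_iff_ne_zero, Ne, ZMod.val_eq_zero]; exact hh
  have hvp : h.val < p := ZMod.val_lt h
  have hp : (0 : ℝ) < p := by exact_mod_cast hv.trans hvp
  have hv' : (0 : ℝ) < h.val := by exact_mod_cast hv
  have hvp' : (h.val : ℝ) < p := by exact_mod_cast hvp
  set w : ℂ := ZMod.stdAddChar (-h) with hw
  have hwn : ‖w‖ = 1 := by
    rw [hw]; exact Circle.norm_coe _
  have hterm : ∀ d : ℕ, ZMod.stdAddChar (-(h * (d : ZMod p))) = w ^ d := by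
    intro d
    rw [hw, ← AddChar.map_nsmul_eq_pow]
    congr 1
    simp [mul_comm]
  have hsinpos : 0 < Real.sin (Real.pi * h.val / p) := by
    apply Real.sin_pos_of_pos_of_lt_pi
    · have := Real.pi_pos
      positivity
    · rw [div_lt_iff₀ hp]
      nlinarith [Real.pi_pos]
  have hw1 : ‖w - 1‖ = 2 * Real.sin (Real.pi * h.val / p) := by
    have e : w = Complex.exp (Complex.I * ((-(2 * Real.pi * h.val / p) : ℝ) : ℂ)) := by
      have : (-h) = (((-(h.val : ℤ)) : ℤ) : ZMod p) := by
        push_cast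
        simp
      rw [hw, this, ZMod.stdAddChar_coe]
      congr 1
      push_cast
      ring
    rw [e, Complex.norm_exp_I_mul_ofReal_sub_one]
    have : -(2 * Real.pi * h.val / p) / 2 = -(Real.pi * h.val / p) := by ring
    rw [this, Real.sin_neg, Real.norm_eq_abs, mul_neg, abs_neg, abs_of_pos (by positivity)]
  have hne : w ≠ 1 := by
    intro hc
    rw [hc, sub_self, norm_zero] at hw1
    linarith
  unfold fc
  simp_rw [hterm]
  rw [geom_sum_eq hne, norm_mul, norm_div, norm_div, hw1]
  have h2 : ‖w ^ m - 1‖ ≤ 2 := by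
    refine (norm_sub_le _ _).trans ?_
    rw [norm_pow, hwn]
    norm_num
  simp only [norm_one, Complex.norm_natCast]
  have h3 := sin_lower p h.val hv hvp
  calc 1 / (p : ℝ) * (‖w ^ m - 1‖ / (2 * Real.sin (Real.pi * h.val / p)))
      ≤ 1 / (p : ℝ) * (2 / (2 * Real.sin (Real.pi * h.val / p))) := by gcongr
    _ = 1 / (p : ℝ) * (1 / Real.sin (Real.pi * h.val / p)) := by
        field_simp
    _ ≤ 1 / (p : ℝ) * (p / 2 * (1 / (h.val : ℝ) + 1 / ((p : ℝ) - h.val))) := by gcongr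
    _ = _ := by field_simp

lemma sum_norm_fc_le (p : ℕ) [NeZero p] (m : ℕ) (hm : m ≤ p) :
    ∑ h : ZMod p, ‖fc p m h‖ ≤ 2 + Real.log p := by
  obtain ⟨q, rfl⟩ : ∃ q, p = q + 1 := Nat.exists_eq_succ_of_ne_zero (NeZero.ne p)
  set g : ℕ → ℝ := fun v => (if v = 0 then 1 else 0) +
    (1 / (v : ℝ) + 1 / (((q + 1 : ℕ) : ℝ) - v)) / 2 with hg
  have h1 : ∀ h : ZMod (q + 1), ‖fc (q + 1) m h‖ ≤ g h.val := by
    intro h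
    by_cases hh : h = 0
    · subst hh
      refine (norm_fc_zero_le _ _ hm).trans ?_
      simp [hg]
      positivity
    · have : h.val ≠ 0 := by rwa [Ne, ZMod.val_eq_zero]
      simp only [hg, this, if_false, zero_add]
      exact norm_fc_le _ _ _ hh
  refine (sum_le_sum fun h _ => h1 h).trans ?_
  have h2 : ∑ h : ZMod (q + 1), g h.val = ∑ v ∈ range (q + 1), g v :=
    Fin.sum_univ_eq_sum_range g (q + 1)
  rw [h2]
  simp only [hg, sum_add_distrib, ← sum_div]
  have h3 : ∑ v ∈ range (q + 1), 1 / (v : ℝ) ≤ ((harmonic (q + 1) : ℚ) : ℝ) := by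
    rw [sum_range_succ']
    simp only [harmonic]
    push_cast
    rw [sum_range_succ]
    simp
    positivity
  have h4 : ∑ v ∈ range (q + 1), 1 / (((q + 1 : ℕ) : ℝ) - v) = ((harmonic (q + 1) : ℚ) : ℝ) := by
    rw [← sum_range_reflect]
    simp only [harmonic]
    push_cast
    refine sum_congr rfl fun v hv => ?_
    have : v ≤ q := Nat.lt_succ_iff.1 (mem_range.1 hv)
    rw [Nat.cast_sub this, one_div]
    congr 1
    ring
  have h5 := harmonic_le_one_add_log (q + 1)
  rw [h4]
  have h6 : ∑ v ∈ range (q + 1), (if v = 0 then (1 : ℝ) else 0) = 1 := by simp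
  rw [h6]
  linarith

lemma root_count (p : ℕ) [Fact p.Prime] {ι : Type*} [Fintype ι] (e : ι → ℕ)
    (he : Function.Injective e) (J : ℕ) (hJ : ∀ i, e i < J) (h : ι → ZMod p) (hh : h ≠ 0) :
    (univ.filter fun a : ZMod p => ∑ i, h i * a ^ e i = 0).card ≤ J := by
  classical
  set Q : Polynomial (ZMod p) := ∑ i, Polynomial.C (h i) * Polynomial.X ^ e i with hQ
  have hcoeff : ∀ i, Q.coeff (e i) = h i := by
    intro i
    simp only [hQ, Polynomial.finsetSum_coeff, Polynomial.coeff_C_mul_X_pow]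
    rw [sum_eq_single i]
    · simp
    · intro b _ hb
      rw [if_neg]
      intro hc
      exact hb (he hc).symm
    · simp
  have hQ0 : Q ≠ 0 := by
    intro hc
    apply hh
    funext i
    rw [← hcoeff i, hc]
    simp
  have hdeg : Q.natDegree ≤ J := by
    apply Polynomial.natDegree_sum_le_of_forall_le
    intro i _
    exact (Polynomial.natDegree_C_mul_X_pow_le _ _).trans (hJ i).le
  calc _ ≤ Q.roots.toFinset.card := by
        apply card_le_card
        intro a ha
        simp only [mem_filter, mem_univ, true_and] at ha
        rw [Multiset.mem_toFinset, Polynomial.mem_roots hQ0]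
        simp [hQ, Polynomial.IsRoot, Polynomial.eval_finsetSum, ha]
    _ ≤ Q.roots.card := Multiset.toFinset_card_le _
    _ ≤ J := (Polynomial.card_roots' Q).trans hdeg

lemma charMapSum {A : Type*} [AddCommMonoid A] {ι : Type*} (u : Finset ι) (ψ : AddChar A ℂ)
    (f : ι → A) : ψ (∑ i ∈ u, f i) = ∏ i ∈ u, ψ (f i) := by
  classical
  induction u using Finset.induction_on with
  | empty => simp
  | insert i u hi ih => rw [sum_insert hi, prod_insert hi, AddChar.map_add_eq_mul, ih]

lemma char_sum (p : ℕ) [Fact p.Prime] {ι : Type*} [Fintype ι] (e : ι → ℕ) (h : ι → ZMod p) :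
    ∑ x : ZMod p × ZMod p, ∏ i, ZMod.stdAddChar (h i * (x.1 ^ e i * x.2)) =
      ((univ.filter fun a : ZMod p => ∑ i, h i * a ^ e i = 0).card : ℂ) * p := by
  rw [Fintype.sum_prod_type]
  have h1 : ∀ a : ZMod p, ∑ k : ZMod p, ∏ i, ZMod.stdAddChar (h i * (a ^ e i * k)) =
      if ∑ i, h i * a ^ e i = 0 then (p : ℂ) else 0 := by
    intro a
    have h2 : ∀ k : ZMod p, ∏ i, ZMod.stdAddChar (h i * (a ^ e i * k)) =
        ZMod.stdAddChar (k * ∑ i, h i * a ^ e i) := by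
      intro k
      rw [← charMapSum, mul_sum]
      congr 1
      refine sum_congr rfl fun i _ => ?_
      ring
    simp_rw [h2]
    rw [AddChar.sum_mulShift _ (ZMod.isPrimitive_stdAddChar p)]
    simp [ZMod.card]
  simp_rw [h1]
  rw [← sum_filter, sum_const, nsmul_eq_mul]

lemma count_bound (p : ℕ) [Fact p.Prime] {ι : Type*} [Fintype ι] (e : ι → ℕ)
    (he : Function.Injective e) (J : ℕ) (hJ : ∀ i, e i < J) (m : ι → ℕ) (hm : ∀ i, m i ≤ p) :
    |((univ.filter fun x : ZMod p × ZMod p => ∀ i, (x.1 ^ e i * x.2).val < m i).card : ℝ)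
        / (p : ℝ) ^ 2 - ∏ i, (m i : ℝ) / p| ≤ J / p * (2 + Real.log p) ^ Fintype.card ι := by
  classical
  have hp : (0 : ℝ) < p := by exact_mod_cast (Fact.out : p.Prime).pos
  have hpC : (p : ℂ) ≠ 0 := by exact_mod_cast (Fact.out : p.Prime).ne_zero
  set cnt : (ι → ZMod p) → ℕ := fun h =>
    (univ.filter fun a : ZMod p => ∑ i, h i * a ^ e i = 0).card with hcnt
  have h1 : (((univ.filter fun x : ZMod p × ZMod p =>
      ∀ i, (x.1 ^ e i * x.2).val < m i).card : ℕ) : ℂ) =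
      ∑ h : ι → ZMod p, (∏ i, fc p (m i) (h i)) * ((cnt h : ℂ) * p) := by
    rw [card_filter]
    push_cast
    have h2 : ∀ x : ZMod p × ZMod p,
        (if ∀ i, (x.1 ^ e i * x.2).val < m i then (1 : ℂ) else 0) =
        ∑ h : ι → ZMod p, (∏ i, fc p (m i) (h i)) *
          ∏ i, ZMod.stdAddChar (h i * (x.1 ^ e i * x.2)) := by
      intro x
      have h3 : (if ∀ i, (x.1 ^ e i * x.2).val < m i then (1 : ℂ) else 0) =
          ∏ i, if (x.1 ^ e i * x.2).val < m i then (1 : ℂ) else 0 := by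
        rw [prod_ite_zero]
        simp
      rw [h3]
      simp_rw [indicator_eq p _ (hm _), Fintype.prod_sum, prod_mul_distrib]
    simp_rw [h2]
    rw [sum_comm]
    refine sum_congr rfl fun h _ => ?_
    rw [← mul_sum, char_sum]
  have hcnt0 : cnt 0 = p := by
    simp [hcnt, ZMod.card]
  have h4 : (((univ.filter fun x : ZMod p × ZMod p =>
      ∀ i, (x.1 ^ e i * x.2).val < m i).card : ℕ) : ℂ) / (p : ℂ) ^ 2 - ∏ i, (m i : ℂ) / p =
      ∑ h ∈ univ.erase (0 : ι → ZMod p), (∏ i, fc p (m i) (h i)) * ((cnt h : ℂ) / p) := by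
    rw [h1, ← add_sum_erase _ _ (mem_univ (0 : ι → ZMod p)), hcnt0, add_div, sum_div]
    simp only [Pi.zero_apply, fc_zero]
    have h5 : (∏ i, (m i : ℂ) / p) * ((p : ℂ) * p) / (p : ℂ) ^ 2 = ∏ i, (m i : ℂ) / p := by
      field_simp
    rw [h5, add_sub_cancel_left]
    refine sum_congr rfl fun h _ => ?_
    field_simp
  have h6 : |((univ.filter fun x : ZMod p × ZMod p =>
      ∀ i, (x.1 ^ e i * x.2).val < m i).card : ℝ) / (p : ℝ) ^ 2 - ∏ i, (m i : ℝ) / p| =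
      ‖∑ h ∈ univ.erase (0 : ι → ZMod p), (∏ i, fc p (m i) (h i)) * ((cnt h : ℂ) / p)‖ := by
    rw [← h4, ← Real.norm_eq_abs, ← Complex.norm_real]
    push_cast
    rfl
  rw [h6]
  calc _ ≤ ∑ h ∈ univ.erase (0 : ι → ZMod p), (∏ i, ‖fc p (m i) (h i)‖) * (J / p) := by
        refine norm_sum_le_of_le _ fun h hh => ?_
        rw [norm_mul, norm_prod, norm_div, Complex.norm_natCast, Complex.norm_natCast]
        have : (cnt h : ℝ) ≤ J := by
          exact_mod_cast root_count p e he J hJ h (ne_of_mem_erase hh)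
        have h0 : 0 ≤ ∏ i, ‖fc p (m i) (h i)‖ := prod_nonneg fun _ _ => norm_nonneg _
        gcongr
    _ ≤ ∑ h : ι → ZMod p, (∏ i, ‖fc p (m i) (h i)‖) * (J / p) := by
        apply sum_le_sum_of_subset_of_nonneg (erase_subset _ _)
        intro h _ _
        have h0 : 0 ≤ ∏ i, ‖fc p (m i) (h i)‖ := prod_nonneg fun _ _ => norm_nonneg _
        positivity
    _ = (∏ i, ∑ h : ZMod p, ‖fc p (m i) h‖) * (J / p) := by
        rw [← sum_mul, Fintype.prod_sum]
    _ ≤ (∏ _i : ι, (2 + Real.log p)) * (J / p) := by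
        gcongr with i _
        exact sum_norm_fc_le p (m i) (hm i)
    _ = _ := by
        rw [prod_const, card_univ]
        ring

lemma prod_diff {ι : Type*} (u : Finset ι) (a b : ι → ℝ) (c : ℝ)
    (ha : ∀ i ∈ u, |a i| ≤ 1) (hb : ∀ i ∈ u, |b i| ≤ 1) (hab : ∀ i ∈ u, |a i - b i| ≤ c) :
    |∏ i ∈ u, a i - ∏ i ∈ u, b i| ≤ u.card * c := by
  classical
  induction u using Finset.induction_on with
  | empty => simp
  | insert i u hi ih =>
    rw [prod_insert hi, prod_insert hi, card_insert_of_notMem hi]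
    have ih' := ih (fun j hj => ha j (mem_insert_of_mem hj))
      (fun j hj => hb j (mem_insert_of_mem hj)) (fun j hj => hab j (mem_insert_of_mem hj))
    have hB : |∏ j ∈ u, b j| ≤ 1 := by
      rw [abs_prod]
      exact prod_le_one (fun _ _ => abs_nonneg _) fun j hj => hb j (mem_insert_of_mem hj)
    have h1 := ha i (mem_insert_self _ _)
    have h2 := hab i (mem_insert_self _ _)
    calc |a i * ∏ j ∈ u, a j - b i * ∏ j ∈ u, b j|
        = |a i * (∏ j ∈ u, a j - ∏ j ∈ u, b j) + (a i - b i) * ∏ j ∈ u, b j| := by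
          congr 1; ring
      _ ≤ |a i| * |∏ j ∈ u, a j - ∏ j ∈ u, b j| + |a i - b i| * |∏ j ∈ u, b j| := by
          rw [← abs_mul, ← abs_mul]; exact abs_add_le _ _
      _ ≤ 1 * (u.card * c) + c * 1 := by
          gcongr
          exact (abs_nonneg _).trans h2
      _ = _ := by push_cast; ring

lemma local_bound (p s : ℕ) [Fact p.Prime] (u : Finset (Fin s)) (J : ℕ)
    (hJ : ∀ j ∈ u, j.1 < J) (z : Fin s → ℝ) (hz : ∀ j, z j ∈ Set.Icc (0 : ℝ) 1) :
    |localDisc (huaWangR p s) (projPoint u z)| ≤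
      J / p * (2 + Real.log p) ^ u.card + u.card * (1 / p) := by
  classical
  have hpp : p.Prime := Fact.out
  have hp : (0 : ℝ) < p := by exact_mod_cast hpp.pos
  set m : Fin s → ℕ := fun j => ⌈(p : ℝ) * z j⌉₊ with hm
  have hmp : ∀ j, m j ≤ p := by
    intro j
    simp only [hm]
    rw [Nat.ceil_le]
    nlinarith [(hz j).2]
  -- the index bijection
  let φ : Fin (p ^ 2) → ZMod p × ZMod p := fun n => (((n.1 / p : ℕ) : ZMod p), ((n.1 % p : ℕ) : ZMod p))
  have hφ : Function.Bijective φ := by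
    rw [Fintype.bijective_iff_injective_and_card]
    refine ⟨?_, by simp [ZMod.card, sq]⟩
    intro n n' hnn
    simp only [φ, Prod.mk.injEq] at hnn
    have hlt : ∀ n : Fin (p ^ 2), n.1 / p < p := fun n =>
      Nat.div_lt_of_lt_mul (by rw [← sq]; exact n.2)
    have h1 := congrArg ZMod.val hnn.1
    have h2 := congrArg ZMod.val hnn.2
    rw [ZMod.val_cast_of_lt (hlt n), ZMod.val_cast_of_lt (hlt n')] at h1
    rw [ZMod.val_cast_of_lt (Nat.mod_lt _ hpp.pos), ZMod.val_cast_of_lt (Nat.mod_lt _ hpp.pos)] at h2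
    apply Fin.ext
    rw [← Nat.div_add_mod n.1 p, ← Nat.div_add_mod n'.1 p, h1, h2]
  have hcond : ∀ n : Fin (p ^ 2), (∀ j, huaWangR p s n j < projPoint u z j) ↔
      ∀ i : u, ((φ n).1 ^ (i.1.1) * (φ n).2).val < m i.1 := by
    intro n
    have hkey : ∀ j : Fin s, huaWangR p s n j = ((((φ n).1 ^ j.1 * (φ n).2).val : ℕ) : ℝ) / p := by
      intro j
      have e1 : (φ n).1 ^ j.1 * (φ n).2 = (((n.1 / p) ^ j.1 * (n.1 % p) : ℕ) : ZMod p) := by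
        simp only [φ]; push_cast; rfl
      rw [e1, ZMod.val_natCast, ← Int.fract_div_natCast_eq_div_natCast_mod]
      simp only [huaWangR]
      push_cast
      rfl
    constructor
    · intro h i
      have := h i.1
      rw [hkey] at this
      simp only [projPoint, i.2, if_true] at this
      rw [div_lt_iff₀ hp] at this
      simp only [hm]
      rw [Nat.lt_ceil]
      linarith
    · intro h j
      by_cases hj : j ∈ u
      · have := h ⟨j, hj⟩
        simp only [hm] at this
        rw [Nat.lt_ceil] at this
        rw [hkey]
        simp only [projPoint, hj, if_true]
        rw [div_lt_iff₀ hp]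
        linarith
      · simp only [projPoint, hj, if_false, huaWangR]
        exact Int.fract_lt_one _
  have hcard : (univ.filter fun n => ∀ j, huaWangR p s n j < projPoint u z j).card =
      (univ.filter fun x : ZMod p × ZMod p =>
        ∀ i : u, (x.1 ^ (i.1.1) * x.2).val < m i.1).card := by
    refine card_bij (fun n _ => φ n) ?_ ?_ ?_
    · intro n hn
      simp only [mem_filter, mem_univ, true_and] at hn ⊢
      exact (hcond n).1 hn
    · intro a _ b _ hab
      exact hφ.1 hab
    · intro x hx
      obtain ⟨n, rfl⟩ := hφ.2 x
      refine ⟨n, ?_, rfl⟩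
      simp only [mem_filter, mem_univ, true_and] at hx ⊢
      exact (hcond n).2 hx
  have hprod : ∏ j, projPoint u z j = ∏ j ∈ u, z j := by
    simp only [projPoint]
    rw [prod_ite_mem, univ_inter]
  have hB := count_bound p (fun i : u => i.1.1)
    (fun a b hab => Subtype.ext (Fin.ext hab)) J (fun i => hJ i.1 i.2)
    (fun i : u => m i.1) (fun i => hmp i.1)
  rw [Fintype.card_coe, prod_coe_sort u (fun j => (m j : ℝ) / p)] at hB
  have hD := prod_diff u (fun j => (m j : ℝ) / p) z (1 / p)
    (by
      intro i _
      rw [abs_of_nonneg (by positivity)]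
      exact div_le_one_of_le₀ (by exact_mod_cast hmp i) hp.le)
    (by
      intro i _
      rw [abs_of_nonneg (hz i).1]
      exact (hz i).2)
    (by
      intro i _
      have h1 : (p : ℝ) * z i ≤ m i := Nat.le_ceil _
      have h2 : (m i : ℝ) < p * z i + 1 :=
        Nat.ceil_lt_add_one (mul_nonneg hp.le (hz i).1)
      have h3 : (m i : ℝ) / p - z i = (m i - p * z i) / p := by field_simp
      rw [h3, abs_of_nonneg (div_nonneg (by linarith) hp.le)]
      gcongr
      linarith)
  unfold localDisc
  rw [hcard, hprod]
  push_cast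
  calc _ = |(_ - ∏ j ∈ u, (m j : ℝ) / p) + (∏ j ∈ u, (m j : ℝ) / p - ∏ j ∈ u, z j)| := by
        rw [sub_add_sub_cancel]
    _ ≤ _ := (abs_add_le _ _).trans (add_le_add hB hD)

lemma factor_bound (a η : ℝ) (ha : 0 ≤ a) (hη : 0 < η) (x : ℝ) (hx : 1 ≤ x) :
    1 + a * (2 + Real.log x) ≤ (1 + 2 * a + a / η) * x ^ η := by
  have h1 := Real.log_le_rpow_div (by linarith : 0 ≤ x) hη
  have h2 := Real.one_le_rpow hx hη.le
  have h3 : a * Real.log x ≤ a / η * x ^ η := by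
    calc a * Real.log x ≤ a * (x ^ η / η) := by gcongr
      _ = _ := by ring
  nlinarith

lemma prod_bound (g : ℕ → ℝ) (hg : ∀ j, 0 ≤ g j) (hs : Summable g) (ε : ℝ) (hε : 0 < ε) :
    ∃ C : ℝ, 0 < C ∧ ∀ x : ℝ, 1 ≤ x → ∀ S : Finset ℕ,
      ∏ j ∈ S, (1 + g j * (2 + Real.log x)) ≤ C * x ^ ε := by
  classical
  obtain ⟨T, hT⟩ := (summable_iff_vanishing_norm.1 hs) (ε / 2) (by positivity)
  set η := ε / (2 * (T.card + 1)) with hη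
  have hη0 : 0 < η := by positivity
  refine ⟨(∏ j ∈ T, (1 + 2 * g j + g j / η)) * Real.exp ε, ?_, ?_⟩
  · apply mul_pos _ (Real.exp_pos _)
    exact prod_pos fun j _ => by have := hg j; positivity
  intro x hx S
  have hx0 : 0 < x := by linarith
  have hl : 0 ≤ Real.log x := Real.log_nonneg hx
  have h1 : ∏ j ∈ S ∩ T, (1 + g j * (2 + Real.log x)) ≤
      (∏ j ∈ T, (1 + 2 * g j + g j / η)) * x ^ (ε / 2) := by
    calc _ ≤ ∏ j ∈ T, (1 + g j * (2 + Real.log x)) := by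
          have hone : ∀ j, 1 ≤ 1 + g j * (2 + Real.log x) := fun j => by
            have : 0 ≤ g j * (2 + Real.log x) := mul_nonneg (hg j) (by linarith)
            linarith
          rw [← prod_sdiff (inter_subset_right : S ∩ T ⊆ T)]
          refine le_mul_of_one_le_left (prod_nonneg fun j _ => zero_le_one.trans (hone j)) ?_
          exact Finset.prod_induction _ (fun y => 1 ≤ y) (fun a b ha hb => one_le_mul_of_one_le_of_one_le ha hb)
            le_rfl fun j _ => hone j
      _ ≤ ∏ j ∈ T, ((1 + 2 * g j + g j / η) * x ^ η) := by
          apply prod_le_prod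
          · intro j _
            have := hg j
            positivity
          · intro j _
            exact factor_bound _ _ (hg j) hη0 x hx
      _ = (∏ j ∈ T, (1 + 2 * g j + g j / η)) * x ^ (η * T.card) := by
          rw [prod_mul_distrib, prod_const, Real.rpow_mul hx0.le, Real.rpow_natCast]
      _ ≤ _ := by
          have h0 : 0 ≤ ∏ j ∈ T, (1 + 2 * g j + g j / η) :=
            prod_nonneg fun j _ => by have := hg j; positivity
          have : η * T.card ≤ ε / 2 := by
            rw [hη, div_mul_eq_mul_div, div_le_div_iff₀ (by positivity) (by norm_num)]
            nlinarith
          gcongr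
  have h2 : ∏ j ∈ S \ T, (1 + g j * (2 + Real.log x)) ≤ Real.exp ε * x ^ (ε / 2) := by
    calc _ ≤ Real.exp (∑ j ∈ S \ T, g j * (2 + Real.log x)) :=
          Real.prod_one_add_le_exp_sum _ fun j => mul_nonneg (hg j) (by linarith)
      _ ≤ Real.exp (ε / 2 * (2 + Real.log x)) := by
          rw [← sum_mul]
          have h3 := hT (S \ T) sdiff_disjoint
          have h4 := (le_abs_self _).trans h3.le
          gcongr
      _ = _ := by
          rw [Real.rpow_def_of_pos hx0, ← Real.exp_add]
          congr 1
          ring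
  calc _ = (∏ j ∈ S ∩ T, (1 + g j * (2 + Real.log x))) *
        ∏ j ∈ S \ T, (1 + g j * (2 + Real.log x)) := (prod_inter_mul_prod_sdiff _ _ _).symm
    _ ≤ ((∏ j ∈ T, (1 + 2 * g j + g j / η)) * x ^ (ε / 2)) * (Real.exp ε * x ^ (ε / 2)) := by
        apply mul_le_mul h1 h2
        · exact prod_nonneg fun j _ => by have := hg j; positivity
        · exact mul_nonneg (prod_nonneg fun j _ => by have := hg j; positivity) (by positivity)
    _ = (∏ j ∈ T, (1 + 2 * g j + g j / η)) * Real.exp ε * (x ^ (ε / 2) * x ^ (ε / 2)) := by ring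
    _ = _ := by
        rw [← Real.rpow_add hx0, add_halves]

end HuaWang

/-- for non-increasing, summable, nonnegative weights and any `δ > 0`,
`D*_γ(R_{p²,s}) ≤ C p^{−(1−δ)}` with `C` independent of the prime `p` and of `s`. -/
theorem wStarDisc_huaWangR_le (γ : ℕ → ℝ) (hγ : ∀ j, 1 ≤ j → 0 ≤ γ j)
    (hdec : ∀ j, 1 ≤ j → γ (j + 1) ≤ γ j)
    (hsum : Summable fun j => γ (j + 1)) (δ : ℝ) (hδ : 0 < δ) :
    ∃ C : ℝ, 0 < C ∧ ∀ p s : ℕ, p.Prime → 1 ≤ s →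
      wStarDisc γ (huaWangR p s) ≤ C * (p : ℝ) ^ (-(1 - δ) : ℝ) := by
  classical
  set g : ℕ → ℝ := fun j => γ (j + 1) with hgdef
  have hg : ∀ j, 0 ≤ g j := fun j => hγ (j + 1) (by omega)
  have hanti : Antitone g := antitone_nat_of_succ_le fun n => hdec (n + 1) (by omega)
  set A : ℝ := ∑' j, g j with hA
  have hA0 : 0 ≤ A := tsum_nonneg hg
  have hAJ : ∀ j : ℕ, ((j : ℝ) + 1) * g j ≤ A := by
    intro j
    have h1 : ∑ _i ∈ range (j + 1), g j ≤ ∑ i ∈ range (j + 1), g i :=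
      sum_le_sum fun i hi => hanti (Nat.lt_succ_iff.1 (mem_range.1 hi))
    have h2 := hsum.sum_le_tsum (range (j + 1)) fun i _ => hg i
    rw [sum_const, card_range, nsmul_eq_mul] at h1
    push_cast at h1
    exact h1.trans h2
  obtain ⟨C, hC, hbound⟩ := HuaWang.prod_bound g hg hsum (δ / 2) (by positivity)
  set D : ℝ := 1 + 2 * 1 + 1 / (δ / 2) with hD
  have hD0 : 0 < D := by positivity
  refine ⟨2 * ((A + 1) * D * C), by positivity, ?_⟩
  intro p s hp hs
  have : Fact p.Prime := ⟨hp⟩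
  have hp0 : (0 : ℝ) < p := by exact_mod_cast hp.pos
  have hp1 : (1 : ℝ) ≤ p := by exact_mod_cast hp.one_le
  have hl : 0 ≤ Real.log p := Real.log_nonneg hp1
  apply Real.sSup_le _ (by positivity)
  rintro d ⟨z, hz, u, hu, rfl⟩
  set j0 : Fin s := u.max' hu with hj0
  set L : ℝ := 2 + Real.log p with hL
  have hL1 : 1 ≤ L := by linarith
  have hlt : ∀ j ∈ u, j.1 < j0.1 + 1 := fun j hj =>
    Nat.lt_succ_of_le (u.le_max' j hj)
  have hloc := HuaWang.local_bound p s u (j0.1 + 1) hlt z hz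
  have hcard : (u.card : ℝ) ≤ (j0.1 : ℝ) + 1 := by
    have : u.card ≤ (range (j0.1 + 1)).card :=
      card_le_card_of_injOn (fun j => j.1) (fun j hj => by
        simpa using hlt j hj) (fun a _ b _ hab => Fin.ext hab)
    rw [card_range] at this
    exact_mod_cast this
  have hpow : 1 ≤ L ^ u.card := one_le_pow₀ hL1
  have hloc2 : |localDisc (huaWangR p s) (projPoint u z)| ≤
      2 * (((j0.1 : ℝ) + 1) * L ^ u.card) / p := by
    refine hloc.trans ?_
    push_cast
    rw [div_mul_eq_mul_div, mul_one_div, ← add_div]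
    gcongr
    nlinarith
  have hw0 : 0 ≤ weightOf γ u := prod_nonneg fun j _ => hg j
  have hmain : weightOf γ u * (((j0.1 : ℝ) + 1) * L ^ u.card) ≤
      (A + 1) * D * C * (p : ℝ) ^ δ := by
    have e1 : weightOf γ u * L ^ u.card = ∏ j ∈ u, (g j.1 * L) := by
      rw [prod_mul_distrib, prod_const]; rfl
    have hmem : j0 ∈ u := u.max'_mem hu
    have e2 : ∏ j ∈ u, (g j.1 * L) = (g j0.1 * L) * ∏ j ∈ u.erase j0, (g j.1 * L) :=
      (mul_prod_erase u (fun j => g j.1 * L) hmem).symm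
    have hP : ∏ j ∈ u.erase j0, (g j.1 * L) ≤ C * (p : ℝ) ^ (δ / 2) := by
      refine le_trans ?_ (hbound p hp1 ((u.erase j0).map Fin.valEmbedding))
      rw [prod_map]
      apply prod_le_prod
      · intro j _
        exact mul_nonneg (hg _) (by linarith)
      · intro j _
        simp only [Fin.valEmbedding_apply]
        linarith
    have hP0 : 0 ≤ ∏ j ∈ u.erase j0, (g j.1 * L) :=
      prod_nonneg fun j _ => mul_nonneg (hg _) (by linarith)
    have hLb : L ≤ D * (p : ℝ) ^ (δ / 2) := by
      have := HuaWang.factor_bound 1 (δ / 2) (by norm_num) (by positivity) p hp1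
      rw [← hD] at this
      linarith
    calc weightOf γ u * (((j0.1 : ℝ) + 1) * L ^ u.card)
        = ((j0.1 : ℝ) + 1) * (weightOf γ u * L ^ u.card) := by ring
      _ = (((j0.1 : ℝ) + 1) * g j0.1) * L * ∏ j ∈ u.erase j0, (g j.1 * L) := by
          rw [e1, e2]; ring
      _ ≤ (A + 1) * (D * (p : ℝ) ^ (δ / 2)) * (C * (p : ℝ) ^ (δ / 2)) := by
          have := hAJ j0.1
          have h0 : ((j0.1 : ℝ) + 1) * g j0.1 ≤ A + 1 := by linarith
          gcongr
      _ = (A + 1) * D * C * ((p : ℝ) ^ (δ / 2) * (p : ℝ) ^ (δ / 2)) := by ring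
      _ = _ := by rw [← Real.rpow_add hp0, add_halves]
  have hfin : (p : ℝ) ^ (-(1 - δ) : ℝ) = (p : ℝ) ^ δ / p := by
    rw [show -(1 - δ) = δ - 1 by ring, Real.rpow_sub hp0, Real.rpow_one]
  calc _ ≤ weightOf γ u * (2 * (((j0.1 : ℝ) + 1) * L ^ u.card) / p) := by gcongr
    _ = 2 * (weightOf γ u * (((j0.1 : ℝ) + 1) * L ^ u.card)) / p := by ring
    _ ≤ 2 * ((A + 1) * D * C * (p : ℝ) ^ δ) / p := by gcongr
    _ = _ := by rw [hfin]; ring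
end
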